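/- arXiv:2602.03602 — 3 statements merged into one kernel-verified Lean document; each statement's English description precedes it below -/
import Mathlib

section
/- For any multigraph G on n vertices, the adjugate of the Laplacian matrix L(G) equals τ(G)·J, where τ(G) is the number of spanning trees of G and J is the all-ones matrix. -/
open scoped Classical

/-!
The rows of the Laplacian sum to zero, so its adjugate has constant columns and only the diagonal
cofactors matter. Replacing row `r` by the unit vector `e_r`, row `k ≠ r` is
`∑ l, w k l • (e_k - e_l)`, and multilinearity of the determinant turns the cofactor into a sum
over maps `f` fixing `r`, weighted by `∏ k ≠ r, w k (f k)`. The remaining determinant is `1` when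
every vertex reaches `r` under iteration of `f` (the matrix is unitriangular for the number of steps
to `r`), and `0` otherwise (the indicator function of the vertices that miss `r` is in the kernel).
The surviving `f` are the parent maps of the trees rooted at `r`.
-/

open Matrix Finset

section RootedMaps

/-- `f` is the parent map of a tree on `V` rooted at `r`. The root is its own parent, so that `f`
is total, and every vertex reaches it by iterating `f`. -/
def IsRootedAt {V : Type*} (f : V → V) (r : V) : Prop :=
  f r = r ∧ ∀ k, ∃ n, f^[n] k = r

/-- The undirected graph joining each vertex `k` to `f k`; fixed points give no edge. -/
def parentGraph {V : Type*} (f : V → V) : SimpleGraph V :=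
  SimpleGraph.fromRel fun k l => f k = l

variable {V : Type*} {f g : V → V} {r k : V}

namespace IsRootedAt

theorem exists_depth (hf : IsRootedAt f r) : ∃ d : V → ℕ, ∀ k ≠ r, d (f k) < d k := by
  refine ⟨fun k => Nat.find (hf.2 k), fun k hk => (Nat.lt_find_iff _ _).2 fun m hm hreach => ?_⟩
  cases m with
  | zero => exact hk hreach
  | succ m => exact hm.not_gt (Nat.lt_succ_of_le (Nat.find_min' (hf.2 (f k)) hreach))

theorem of_depth (hr : f r = r) (d : V → ℕ) (hd : ∀ k ≠ r, d (f k) < d k) : IsRootedAt f r := by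
  refine ⟨hr, fun k => ?_⟩
  induction k using (measure d).wf.induction with
  | _ k ih =>
    by_cases hk : k = r
    · exact ⟨0, hk⟩
    · obtain ⟨n, hn⟩ := ih (f k) (hd k hk)
      exact ⟨n + 1, hn⟩

theorem induction {p : V → Prop} (hf : IsRootedAt f r) (root : p r)
    (step : ∀ k ≠ r, p (f k) → p k) (k : V) : p k := by
  obtain ⟨d, hd⟩ := hf.exists_depth
  induction k using (measure d).wf.induction with
  | _ k ih =>
    by_cases hk : k = r
    · exact hk ▸ root
    · exact step k hk (ih (f k) (hd k hk))

theorem apply_apply_ne (hf : IsRootedAt f r) (hk : k ≠ r) : f (f k) ≠ k := by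
  obtain ⟨d, hd⟩ := hf.exists_depth
  intro h
  have hfk : f k ≠ r := fun hfk => hk (by rw [← h, hfk, hf.1])
  exact lt_asymm (hd k hk) (by simpa only [h] using hd (f k) hfk)

theorem apply_ne (hf : IsRootedAt f r) (hk : k ≠ r) : f k ≠ k :=
  fun h => hf.apply_apply_ne hk (by rw [h, h])

theorem adj_apply (hf : IsRootedAt f r) (hk : k ≠ r) : (parentGraph f).Adj k (f k) :=
  ⟨(hf.apply_ne hk).symm, Or.inl rfl⟩

theorem connected_parentGraph (hf : IsRootedAt f r) : (parentGraph f).Connected := by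
  have reachable_root : ∀ k, (parentGraph f).Reachable k r :=
    hf.induction .rfl fun _ hk => (hf.adj_apply hk).reachable.trans
  exact (SimpleGraph.connected_iff _).2
    ⟨fun k l => (reachable_root k).trans (reachable_root l).symm, ⟨r⟩⟩

theorem edgeSet_parentGraph (hf : IsRootedAt f r) :
    (parentGraph f).edgeSet = (fun k => s(k, f k)) '' {r}ᶜ := by
  have ne_root {k l : V} (hne : k ≠ l) (h : f k = l) : k ≠ r := by
    rintro rfl
    exact hne (hf.1.symm.trans h)
  ext e
  induction e with
  | _ i j =>
    constructor
    · rintro ⟨hne, h | h⟩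
      · exact ⟨i, ne_root hne h, congrArg (s(i, ·)) h⟩
      · exact ⟨j, ne_root hne.symm h, (congrArg (s(j, ·)) h).trans Sym2.eq_swap⟩
    · rintro ⟨k, hk, h⟩
      exact h ▸ hf.adj_apply hk

theorem injOn_edge (hf : IsRootedAt f r) : Set.InjOn (fun k => s(k, f k)) {r}ᶜ := by
  intro k hk l _ h
  rcases Sym2.eq_iff.1 h with ⟨hkl, _⟩ | ⟨hk_eq, hfk⟩
  · exact hkl
  · exact absurd (hfk ▸ hk_eq.symm) (hf.apply_apply_ne hk)

theorem isTree_parentGraph [Finite V] (hf : IsRootedAt f r) : (parentGraph f).IsTree := by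
  refine SimpleGraph.isTree_iff_connected_and_card.2 ⟨hf.connected_parentGraph, ?_⟩
  rw [Nat.card_coe_set_eq, hf.edgeSet_parentGraph, hf.injOn_edge.ncard_image,
    ← Set.ncard_singleton r, Set.ncard_compl_add_ncard]

theorem prod_edgeFinset_parentGraph {M : Type*} [CommMonoid M] [Fintype V] [DecidableEq V]
    (hf : IsRootedAt f r) (w : Sym2 V → M) :
    ∏ e ∈ (parentGraph f).edgeFinset, w e = ∏ k ∈ univ.erase r, w s(k, f k) := by
  have hedge : (parentGraph f).edgeFinset = (univ.erase r).image fun k => s(k, f k) := by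
    simp [← coe_inj, hf.edgeSet_parentGraph, Set.compl_eq_univ_sdiff]
  rw [hedge, prod_image fun k hk l hl =>
    hf.injOn_edge (ne_of_mem_erase hk) (ne_of_mem_erase hl)]

end IsRootedAt

theorem injOn_parentGraph (r : V) : Set.InjOn parentGraph {f : V → V | IsRootedAt f r} := by
  intro f hf g hg h
  funext k
  induction k using hf.induction with
  | root => rw [hf.1, hg.1]
  | step k hk ih =>
    have hadj : (parentGraph g).Adj k (f k) := h ▸ hf.adj_apply hk
    rcases hadj.2 with hgk | hgfk
    · exact hgk.symm
    · exact absurd (ih.trans hgfk) (hf.apply_apply_ne hk)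

theorem exists_adj_dist_lt_of_connected {G : SimpleGraph V} (hG : G.Connected) (hk : k ≠ r) :
    ∃ l, G.Adj k l ∧ G.dist l r < G.dist k r := by
  obtain ⟨p, hp⟩ := hG.exists_walk_length_eq_dist k r
  cases p with
  | nil => exact absurd rfl hk
  | @cons _ l _ hadj q =>
    rw [SimpleGraph.Walk.length_cons] at hp
    exact ⟨l, hadj, hp ▸ Nat.lt_succ_of_le (SimpleGraph.dist_le q)⟩

theorem exists_isRootedAt_parentGraph_le {G : SimpleGraph V} (hG : G.Connected) (r : V) :
    ∃ f, IsRootedAt f r ∧ parentGraph f ≤ G := by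
  choose! parent hadj hdist using
    fun k (hk : k ≠ r) => exists_adj_dist_lt_of_connected hG hk
  have hf : IsRootedAt (Function.update parent r r) r :=
    .of_depth (Function.update_self ..) (G.dist · r) fun k hk => by
      simpa only [Function.update_of_ne hk] using hdist k hk
  refine ⟨_, hf, SimpleGraph.edgeSet_subset_edgeSet.1 ?_⟩
  rw [hf.edgeSet_parentGraph]
  rintro _ ⟨k, hk, rfl⟩
  simpa only [Function.update_of_ne hk, SimpleGraph.mem_edgeSet] using hadj k hk

theorem bijOn_parentGraph_isTree [Finite V] (r : V) :
    Set.BijOn parentGraph {f : V → V | IsRootedAt f r} {T | T.IsTree} := by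
  refine ⟨fun f hf => hf.isTree_parentGraph, injOn_parentGraph r, fun T hT => ?_⟩
  obtain ⟨f, hf, hle⟩ := exists_isRootedAt_parentGraph_le hT.connected r
  have hmin := SimpleGraph.isTree_iff_minimal_connected.1 hT
  exact ⟨f, hf, hmin.eq_of_le hf.connected_parentGraph hle⟩

end RootedMaps

section SpanningTrees

variable {V R S : Type*} [Fintype V] [DecidableEq V] [CommSemiring R] [CommSemiring S]

/-- The number `τ(G)` of spanning trees of the multigraph `G` on `V` with edge multiplicities `w`,
which may be weights in any commutative semiring. The sum is over all trees on `V`: a tree with an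
edge outside `G` contributes `0`. -/
noncomputable def spanningTreeSum (w : Sym2 V → R) : R :=
  ∑ T : SimpleGraph V with T.IsTree, ∏ e ∈ T.edgeFinset, w e

theorem map_spanningTreeSum (φ : R →+* S) (w : Sym2 V → R) :
    φ (spanningTreeSum w) = spanningTreeSum (φ ∘ w) := by
  simp only [spanningTreeSum, map_sum, map_prod, Function.comp_apply]

theorem spanningTreeSum_eq_sum_le {w : Sym2 V → R} {G : SimpleGraph V}
    (hG : ∀ i j, i ≠ j → w s(i, j) ≠ 0 → G.Adj i j) :
    spanningTreeSum w =
      ∑ T : SimpleGraph V with T.IsTree ∧ T ≤ G, ∏ e ∈ T.edgeFinset, w e := by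
  rw [← filter_filter]
  refine (sum_filter_of_ne fun T _ hT i j hij => hG i j hij.ne fun hw => hT ?_).symm
  exact prod_eq_zero (SimpleGraph.mem_edgeFinset.2 hij) hw

theorem spanningTreeSum_eq_sum_isRootedAt (w : Sym2 V → R) (r : V) :
    spanningTreeSum w =
      ∑ f : V → V with IsRootedAt f r, ∏ k ∈ univ.erase r, w s(k, f k) := by
  have hbij := bijOn_parentGraph_isTree r
  symm
  refine sum_nbij parentGraph ?_ ?_ ?_ fun f hf =>
    (((mem_filter_univ f).1 hf).prod_edgeFinset_parentGraph w).symm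
  · exact fun f hf => (mem_filter_univ _).2 (hbij.mapsTo ((mem_filter_univ f).1 hf))
  · simpa only [coe_filter_univ] using hbij.injOn
  · simpa only [coe_filter_univ] using hbij.surjOn

end SpanningTrees

section Determinants

variable {V R : Type*} [Fintype V] [DecidableEq V] [CommRing R]

theorem det_of_sum_smul {ι : Type*} [Fintype ι] (c : V → ι → R) (x : V → ι → V → R) :
    (of fun k => ∑ l, c k l • x k l).det =
      ∑ f : V → ι, (∏ k, c k (f k)) * (of fun k => x k (f k)).det := by
  let detRows := (detRowAlternating : (V → R) [⋀^V]→ₗ[R] R).toMultilinearMap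
  exact (detRows.map_sum fun k l => c k l • x k l).trans
    (sum_congr rfl fun f _ => detRows.map_smul_univ _ _)

theorem det_eq_one_of_apply_eq_one_apply {α : Type*} [LinearOrder α] {M : Matrix V V R}
    (d : V → α) (hM : ∀ i j, d i ≤ d j → M i j = (1 : Matrix V V R) i j) : M.det = 1 := by
  have htri : M.BlockTriangular (OrderDual.toDual ∘ d) := fun i j (hij : d i < d j) => by
    rw [hM i j hij.le, one_apply_ne (ne_of_apply_ne d hij.ne)]
  have hblock (a : αᵒᵈ) : M.toSquareBlock (OrderDual.toDual ∘ d) a = 1 := by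
    ext i j
    have hij : d i = d j := OrderDual.toDual.injective (i.2.trans j.2.symm)
    simp only [toSquareBlock_def, of_apply, hM _ _ hij.le, one_apply, Subtype.ext_iff]
  simp only [htri.det, hblock, det_one, prod_const_one]

theorem adjugate_apply_eq_of_mulVec_one_eq_zero {M : Matrix V V R} (hM : M *ᵥ 1 = 0)
    (i j r : V) : M.adjugate i r = M.adjugate j r := by
  have hker : M.updateRow r (Pi.single i 1 - Pi.single j 1) *ᵥ 1 = 0 := by
    simp [updateRow_mulVec, hM, sub_dotProduct]
  have hdet : (M.updateRow r (Pi.single i 1 - Pi.single j 1)).det = 0 :=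
    det_eq_zero_of_mulVec_eq_zero_of_mem_nonZeroDivisors hker (i := r) (one_mem _)
  rw [adjugate_apply, adjugate_apply, ← sub_add_cancel (Pi.single i 1) (Pi.single j 1 : V → R),
    det_updateRow_add, hdet, zero_add]

end Determinants

section Laplacian

variable {V R : Type*} [Fintype V] [DecidableEq V] [CommRing R]

/-- The Laplacian (out-degree matrix minus adjacency matrix) of the directed graph with arc
weights `w`; loops cancel. -/
def weightedLaplacian (w : V → V → R) : Matrix V V R :=
  diagonal (fun i => ∑ k, w i k) - of w

/-- The Laplacian grounded at `r`: its row `r` is replaced by a unit vector, so that its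
determinant is the `(r, r)` cofactor of the Laplacian. -/
def groundedLaplacian (w : V → V → R) (r : V) : Matrix V V R :=
  (weightedLaplacian w).updateRow r (Pi.single r 1)

theorem of_ite_eq_weightedLaplacian {w : V → V → R} (hloop : ∀ i, w i i = 0) :
    of (fun i j => if i = j then ∑ k, w i k else -w i j) = weightedLaplacian w := by
  ext i j
  by_cases hij : i = j
  · subst hij
    simp [weightedLaplacian, hloop]
  · simp [weightedLaplacian, hij]

theorem weightedLaplacian_row (w : V → V → R) (i : V) :
    weightedLaplacian w i = ∑ k, w i k • (Pi.single i 1 - Pi.single k 1 : V → R) := by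
  ext j
  simp [weightedLaplacian, diagonal_apply, Pi.single_apply, mul_sub, eq_comm]

theorem weightedLaplacian_mulVec (w : V → V → R) (v : V → R) (i : V) :
    (weightedLaplacian w *ᵥ v) i = ∑ k, w i k * (v i - v k) := by
  simp only [mulVec, weightedLaplacian_row, sum_dotProduct, smul_dotProduct, sub_dotProduct,
    single_one_dotProduct, smul_eq_mul]

theorem groundedLaplacian_row (w : V → V → R) (r k : V) :
    groundedLaplacian w r k = if k = r then Pi.single r 1 else
      ∑ l, w k l • (Pi.single k 1 - Pi.single l 1 : V → R) := by
  split_ifs with hk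
  · rw [groundedLaplacian, hk, updateRow_self]
  · rw [groundedLaplacian, updateRow_ne hk, weightedLaplacian_row]

/-- The grounded Laplacian of the functional digraph with one arc `k ⟶ f k` for each `k ≠ r`. -/
def functionalLaplacian (R : Type*) [CommRing R] (f : V → V) (r : V) : Matrix V V R :=
  groundedLaplacian (fun k => Pi.single (f k) 1) r

theorem functionalLaplacian_row (f : V → V) (r k : V) :
    functionalLaplacian R f r k =
      if k = r then Pi.single r 1 else Pi.single k 1 - Pi.single (f k) 1 := by
  simp [functionalLaplacian, groundedLaplacian_row, Pi.single_apply]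

theorem det_groundedLaplacian_eq_sum_functionalLaplacian (w : V → V → R) (r : V) :
    (groundedLaplacian w r).det = ∑ f : V → V with f r = r,
      (∏ k ∈ univ.erase r, w k (f k)) * (functionalLaplacian R f r).det := by
  let c : V → V → R := Function.update w r (Pi.single r 1)
  have hrow : groundedLaplacian w r = of fun k => ∑ l, c k l •
      if k = r then Pi.single r 1 else (Pi.single k 1 - Pi.single l 1 : V → R) := by
    ext1 k
    by_cases hk : k = r
    · subst hk
      simp [groundedLaplacian_row, c, ← sum_smul]
    · simp [groundedLaplacian_row, c, hk]
  have hprod (f : V → V) : ∏ k, c k (f k) =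
      if f r = r then ∏ k ∈ univ.erase r, w k (f k) else 0 := by
    have hc (k : V) (hk : k ∈ univ.erase r) : c k (f k) = w k (f k) := by
      simp only [c, Function.update_of_ne (ne_of_mem_erase hk)]
    rw [← mul_prod_erase univ _ (mem_univ r), prod_congr rfl hc]
    simp [c, Pi.single_apply]
  have hfun (f : V → V) : functionalLaplacian R f r = of fun k =>
      if k = r then Pi.single r 1 else Pi.single k 1 - Pi.single (f k) 1 :=
    funext (functionalLaplacian_row f r)
  simp only [hrow, det_of_sum_smul, hprod, hfun, sum_filter, ite_mul, zero_mul]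

theorem det_functionalLaplacian_of_isRootedAt {f : V → V} {r : V} (hf : IsRootedAt f r) :
    (functionalLaplacian R f r).det = 1 := by
  obtain ⟨d, hd⟩ := hf.exists_depth
  refine det_eq_one_of_apply_eq_one_apply d fun i j hij => ?_
  rw [functionalLaplacian_row, one_eq_pi_single]
  split_ifs with hi
  · rw [hi]
  · have hj : j ≠ f i := by
      rintro rfl
      exact hij.not_gt (hd i hi)
    simp [hj]

theorem det_functionalLaplacian_of_not_isRootedAt {f : V → V} {r : V} (hr : f r = r)
    (hf : ¬IsRootedAt f r) : (functionalLaplacian R f r).det = 0 := by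
  let misses (k : V) : Prop := ∀ n, f^[n] k ≠ r
  obtain ⟨k, hk⟩ : ∃ k, misses k := by
    simpa [IsRootedAt, hr, misses] using hf
  have hmisses (k : V) (hkr : k ≠ r) : misses (f k) ↔ misses k :=
    ⟨fun h n => n.casesOn hkr h, fun h n => h (n + 1)⟩
  let v : V → R := fun k => if misses k then 1 else 0
  have hker : functionalLaplacian R f r *ᵥ v = 0 := by
    ext i
    rw [mulVec, functionalLaplacian_row]
    split_ifs with hi
    · have hroot : ¬misses r := fun h => h 0 rfl
      simp [v, hroot]
    · simp only [sub_dotProduct, single_one_dotProduct, v, hmisses i hi, sub_self, Pi.zero_apply]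
  refine det_eq_zero_of_mulVec_eq_zero_of_mem_nonZeroDivisors hker (i := k) ?_
  rw [show v k = 1 from if_pos hk]
  exact one_mem _

theorem det_groundedLaplacian (w : V → V → R) (r : V) :
    (groundedLaplacian w r).det =
      ∑ f : V → V with IsRootedAt f r, ∏ k ∈ univ.erase r, w k (f k) := by
  rw [det_groundedLaplacian_eq_sum_functionalLaplacian, sum_filter, sum_filter]
  refine sum_congr rfl fun f _ => ?_
  by_cases hf : IsRootedAt f r
  · rw [if_pos hf.1, if_pos hf, det_functionalLaplacian_of_isRootedAt hf, mul_one]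
  · rw [if_neg hf, ite_eq_right_iff]
    exact fun hr => by rw [det_functionalLaplacian_of_not_isRootedAt hr hf, mul_zero]

theorem adjugate_weightedLaplacian_apply (w : V → V → R) (i r : V) :
    (weightedLaplacian w).adjugate i r =
      ∑ f : V → V with IsRootedAt f r, ∏ k ∈ univ.erase r, w k (f k) := by
  have hker : weightedLaplacian w *ᵥ 1 = 0 := by
    ext k
    simp [weightedLaplacian_mulVec]
  rw [adjugate_apply_eq_of_mulVec_one_eq_zero hker i r r, adjugate_apply]
  exact det_groundedLaplacian w r

end Laplacian

theorem stmt_7_general {V R : Type*} [Fintype V] [DecidableEq V] [CommRing R] (w : Sym2 V → R) :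
    (weightedLaplacian fun i j => w s(i, j)).adjugate =
      spanningTreeSum w • of fun _ _ => (1 : R) := by
  ext i r
  simp only [adjugate_weightedLaplacian_apply, spanningTreeSum_eq_sum_isRootedAt w r,
    Matrix.smul_apply, of_apply, smul_eq_mul, mul_one]

/-- Matrix-Tree Theorem, all-cofactors form: for a loopless multigraph on `N` vertices with
symmetric edge multiplicity function `w`, the adjugate of the Laplacian equals `τ(G)·J`,
where `τ(G)` is the number of spanning trees (sum over spanning trees of the underlying simple
graph of the products of edge multiplicities) and `J` is the all-ones matrix. -/
theorem stmt_7 (N : ℕ) (w : Fin N → Fin N → ℕ)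
    (hsym : ∀ i j, w i j = w j i) (hloop : ∀ i, w i i = 0) :
    (Matrix.of fun i j => if i = j then (∑ k, (w i k : ℤ)) else -(w i j : ℤ) : Matrix (Fin N) (Fin N) ℤ).adjugate
      = ((∑ T ∈ Finset.univ.filter
        (fun T : SimpleGraph (Fin N) =>
          T.IsTree ∧ T ≤ SimpleGraph.fromRel fun i j => w i j ≠ 0),
      ∏ e ∈ T.edgeFinset, Sym2.lift ⟨w, hsym⟩ e : ℕ) : ℤ) • Matrix.of fun _ _ => (1 : ℤ) := by
  have htrees := spanningTreeSum_eq_sum_le (w := Sym2.lift ⟨w, hsym⟩)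
    (G := .fromRel fun i j => w i j ≠ 0) fun _ _ hij hw => ⟨hij, Or.inl hw⟩
  rw [← htrees, ← Nat.coe_castRingHom, map_spanningTreeSum, ← stmt_7_general]
  exact congrArg adjugate (of_ite_eq_weightedLaplacian fun i => by simp [hloop i])
end

section
/- For a spanning forest F of K_{n_1,...,n_s} with c components, the number of spanning trees of K_{n_1,...,n_s} containing F is τ_F(K_{n_1,...,n_s}) = (C_{ij}/(n_i(n − n_j))) · Π_{p=1}^c α_p, for any i, j ∈ {1,...,s}, where C_{ij} is the (i,j) cofactor of the matrix I_s − (Σ_{p=1}^c n_{jp}(m_p − n_{ip})/α_p)_{s×s}. -/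
open Finset

/-- `m_p = |V(T_p)|`: the number of vertices of `K_{n_1,…,n_s}` lying in the `p`-th component
of a spanning forest, where `comp` sends each vertex to the index of its component. -/
noncomputable def mP {s c : ℕ} (n : Fin s → ℕ) (comp : (Σ i, Fin (n i)) → Fin c)
    (p : Fin c) : ℕ :=
  Nat.card {v : Σ i, Fin (n i) // comp v = p}

/-- `n_{ip} = |X_i ∩ V(T_p)|`: the number of vertices of the `i`-th partition class lying in
the `p`-th component. -/
noncomputable def nIP {s c : ℕ} (n : Fin s → ℕ) (comp : (Σ i, Fin (n i)) → Fin c)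
    (i : Fin s) (p : Fin c) : ℕ :=
  Nat.card {v : Σ i, Fin (n i) // v.1 = i ∧ comp v = p}

/-- `α_p = n·m_p − Σ_i n_i·n_{ip}` (as a real number). -/
noncomputable def alphaR {s c : ℕ} (n : Fin s → ℕ) (comp : (Σ i, Fin (n i)) → Fin c)
    (p : Fin c) : ℝ :=
  (∑ i, (n i : ℝ)) * (mP n comp p) - ∑ i, (n i : ℝ) * (nIP n comp i p)

/-- The matrix `Z(0) = I_s − (Σ_p n_{jp}(m_p − n_{ip})/α_p)_{i,j}`. -/
noncomputable def Zzero {s c : ℕ} (n : Fin s → ℕ) (comp : (Σ i, Fin (n i)) → Fin c) :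
    Matrix (Fin s) (Fin s) ℝ :=
  1 - Matrix.of fun i j =>
    ∑ p, (nIP n comp j p : ℝ) * ((mP n comp p : ℝ) - (nIP n comp i p : ℝ)) / alphaR n comp p

/-!
Contracting the components of `F` turns the spanning trees of `G` containing `F` into the spanning
trees of a multigraph on the components, with Laplacian `L`. Since `L` has zero row and column
sums, adding a rank-one matrix gives `det (L + u vᵀ) = τ_F (∑ u) (∑ v)`, which is proved by
deletion-contraction for arbitrary `u` and `v`.

For a complete multipartite graph `L = D − B A`, where `D = diag(α_p)`, `B = (n_{ip})_{p,i}` and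
`A = (m_p − n_{ip})_{i,p}`, while `Z(0) = 1 − A D⁻¹ B`. By Sylvester's determinant identity, the
`(i,j)` cofactor of `Z(0)` times `∏ α_p` is `det (L + u vᵀ)` for `u` the `i`-th column of `B` and
`v` the `j`-th row of `A`; these have entry sums `n_i` and `n − n_j`.
-/

open Matrix SimpleGraph

/-- The `0`-`1` matrix of a map `f : V → C`, with entry `1` at `(f v, v)`: it sends a vector on `V`
to the vector of its sums over the fibers of `f`. -/
def fiberMatrix (R : Type*) [Zero R] [One R] {V C : Type*} [DecidableEq C] (f : V → C) :
    Matrix C V R :=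
  of fun x v => if f v = x then 1 else 0

section FiberMatrix

variable {R V C C' : Type*} [Semiring R] [DecidableEq C] [DecidableEq C']

lemma fiberMatrix_comp [Fintype C] (g : C → C') (f : V → C) :
    fiberMatrix R (g ∘ f) = fiberMatrix R g * fiberMatrix R f := by
  ext x v
  simp [fiberMatrix, mul_apply]

lemma fiberMatrix_mulVec_single [Fintype V] [DecidableEq V] (f : V → C) (v : V) :
    fiberMatrix R f *ᵥ Pi.single v 1 = Pi.single (f v) 1 := by
  ext x
  simp [fiberMatrix, Pi.single_apply, eq_comm]

lemma fiberMatrix_mulVec_one_apply [Fintype V] (f : V → C) (x : C) :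
    (fiberMatrix R f *ᵥ 1) x = Nat.card {v // f v = x} := by
  simp [fiberMatrix, mulVec, dotProduct, Fintype.card_subtype]

lemma fiberMatrix_transpose_mulVec [Fintype C] (f : V → C) (u : C → R) :
    (fiberMatrix R f)ᵀ *ᵥ u = u ∘ f := by
  ext v
  simp [fiberMatrix, mulVec, dotProduct]

lemma sum_fiberMatrix_mulVec [Fintype V] [Fintype C] (f : V → C) (u : V → R) :
    ∑ x, (fiberMatrix R f *ᵥ u) x = ∑ v, u v := by
  simp only [mulVec, dotProduct, fiberMatrix, of_apply]
  rw [sum_comm]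
  simp

lemma fiberMatrix_mul_transpose_apply [Fintype V] (f : V → C) (g : V → C') (x : C) (y : C') :
    (fiberMatrix R f * (fiberMatrix R g)ᵀ) x y = Nat.card {v // f v = x ∧ g v = y} := by
  simp [fiberMatrix, mul_apply, Fintype.card_subtype, ← ite_and, and_comm]

lemma fiberMatrix_mul_diagonal_mul_transpose [Fintype V] [DecidableEq V] (f : V → C)
    (d : V → R) :
    fiberMatrix R f * diagonal d * (fiberMatrix R f)ᵀ = diagonal (fiberMatrix R f *ᵥ d) := by
  ext x y
  rw [mul_apply, diagonal_apply]
  simp only [mul_diagonal, transpose_apply, fiberMatrix, of_apply, mulVec, dotProduct]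
  split_ifs with hxy
  · exact sum_congr rfl fun v _ => by simp +contextual [hxy]
  · exact sum_eq_zero fun v _ => by grind

end FiberMatrix

section MergeInto

variable {C : Type*} [DecidableEq C]

/-- The map merging the point `p` into the point `q ≠ p`. -/
def mergeInto (p : C) (q : {x // x ≠ p}) (x : C) : {x // x ≠ p} :=
  if hx : x = p then q else ⟨x, hx⟩

lemma mergeInto_eq_mergeInto_iff {p : C} {q : {x // x ≠ p}} {x y : C} :
    mergeInto p q x = mergeInto p q y ↔ x = y ∨ (x = p ∧ y = q) ∨ (x = q ∧ y = p) := by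
  unfold mergeInto
  grind

lemma mergeInto_surjective (p : C) (q : {x // x ≠ p}) : Function.Surjective (mergeInto p q) :=
  fun x => ⟨x, by simp [mergeInto, x.2]⟩

end MergeInto

section Determinant

variable {R S C : Type*} [CommRing R] [Fintype S] [DecidableEq S] [Fintype C] [DecidableEq C]

lemma det_updateRow_single_one (M : Matrix C C R) (p : C) :
    (M.updateRow p (Pi.single p 1)).det =
      (M.submatrix (Subtype.val : {x // x ≠ p} → C) Subtype.val).det := by
  have hother : (M.updateRow p (Pi.single p 1)).toSquareBlockProp (· ≠ p) =
      M.submatrix Subtype.val Subtype.val := by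
    ext x y
    simp [toSquareBlockProp, updateRow_ne x.2]
  have hself : (M.updateRow p (Pi.single p 1)).toSquareBlockProp (fun x => ¬ x ≠ p) = 1 := by
    ext ⟨x, hx⟩ ⟨y, hy⟩
    obtain rfl : x = p := not_not.1 hx
    obtain rfl : y = x := not_not.1 hy
    simp [toSquareBlockProp]
  rw [twoBlockTriangular_det _ (· ≠ p), hother, hself, det_one, mul_one]
  intro x hx y hy
  obtain rfl := not_not.1 hx
  simp [hy]

lemma det_add_single_one (M : Matrix C C R) (p : C) :
    (M + single p p 1).det =
      M.det + (M.submatrix (Subtype.val : {x // x ≠ p} → C) Subtype.val).det := by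
  have hrow : M + single p p 1 = M.updateRow p (M p + Pi.single p 1) := by
    ext x y
    obtain rfl | hx := eq_or_ne x p
    · simp [single_apply, Pi.single_apply, eq_comm]
    · simp [hx, hx.symm]
  rw [hrow, det_updateRow_add, updateRow_eq_self, det_updateRow_single_one]

-- Adding row and column `p` to row and column `q` turns `e_p - e_q` into `e_p`.
lemma det_add_vecMulVec_single_sub_single (M : Matrix C C R) (p : C) (q : {x // x ≠ p}) :
    (M + vecMulVec (Pi.single p 1 - Pi.single (q : C) 1)
      (Pi.single p 1 - Pi.single (q : C) 1)).det =
      M.det +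
        (fiberMatrix R (mergeInto p q) * M * (fiberMatrix R (mergeInto p q))ᵀ).det := by
  set w : C → R := Pi.single p 1 - Pi.single (q : C) 1
  set P : Matrix C C R := transvection (q : C) p 1
  have hP_mul_w : P *ᵥ w = Pi.single p 1 := by
    have hwp : w p = 1 := by simp [w, q.2.symm]
    simp only [P, transvection, add_mulVec, one_mulVec, single_mulVec_eq, hwp, mul_one, one_smul]
    exact sub_add_cancel _ _
  have hP_mul_rankOne : P * vecMulVec w w * Pᵀ = single p p 1 := by
    rw [mul_vecMulVec, vecMulVec_mul, vecMul_transpose, hP_mul_w,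
      single_eq_single_vecMulVec_single]
  have hdet_conj (N : Matrix C C R) : (P * N * Pᵀ).det = N.det := by
    simp [P, det_transvection_of_ne _ _ q.2]
  have hfiber : fiberMatrix R (mergeInto p q) = P.submatrix Subtype.val id := by
    ext x y
    have := x.2
    simp only [fiberMatrix, of_apply, mergeInto, P, transvection, submatrix_apply, id,
      Matrix.add_apply, one_apply, single_apply]
    grind
  rw [← hdet_conj, Matrix.mul_add, Matrix.add_mul, hP_mul_rankOne, det_add_single_one, hdet_conj,
    hfiber]
  rfl

lemma det_add_single_mul_one_sub {X : Matrix S S R} (hX : X.det = 0) (i j : S) :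
    (X + single j i 1 * (1 - X)).det = X.adjugate i j := by
  have hrow : X + single j i 1 * (1 - X) = X.updateRow j ((X j - X i) + Pi.single i 1) := by
    ext x y
    obtain rfl | hx := eq_or_ne x j
    · simp [one_apply, Pi.single_apply, eq_comm]
      ring
    · simp [hx]
  have hzero : (X.updateRow j (X j - X i)).det = 0 := by
    obtain rfl | hij := eq_or_ne j i
    · exact det_eq_zero_of_row_eq_zero j (by simp)
    · simpa [hX, sub_eq_add_neg] using det_updateRow_add_smul_self X hij (-1)
  rw [hrow, det_updateRow_add, hzero, zero_add, adjugate_apply]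

lemma adjugate_one_sub_mul_det {A : Matrix S C R} {B : Matrix C S R} {D : Matrix C C R}
    (hD : IsUnit D.det) (hdet : (D - B * A).det = 0) (i j : S) :
    (1 - A * D⁻¹ * B).adjugate i j * D.det =
      (D - B * A + vecMulVec (B.col j) (A.row i)).det := by
  have hswap (A' : Matrix S C R) :
      (D - B * A').det = D.det * (1 - A' * D⁻¹ * B).det := by
    simpa [sub_eq_add_neg] using det_add_mul (-B) A' hD
  have hpert : D - B * A + vecMulVec (B.col j) (A.row i) =
      D - B * ((1 - single j i (1 : R)) * A) := by
    rw [← mulVec_single_one B, ← single_one_vecMul i A, ← vecMulVec_mul, ← mul_vecMulVec,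
      ← single_eq_single_vecMulVec_single]
    simp only [Matrix.sub_mul, Matrix.mul_sub, Matrix.one_mul, Matrix.mul_assoc]
    abel
  have hX : (1 - A * D⁻¹ * B).det = 0 := hD.mul_right_eq_zero.1 (hswap A ▸ hdet)
  rw [hpert, hswap, ← det_add_single_mul_one_sub hX, mul_comm]
  congr 2
  simp only [Matrix.sub_mul, Matrix.one_mul, Matrix.mul_assoc, sub_sub_cancel]
  abel

end Determinant

section LapMatrix

variable {R V : Type*} [Ring R] [Fintype V] [DecidableEq V] (G : SimpleGraph V)
  [DecidableRel G.Adj]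

lemma degMatrix_eq_diagonal_adjMatrix_mulVec_one :
    G.degMatrix R = diagonal (G.adjMatrix R *ᵥ 1) := by
  simp [degMatrix, ← Function.const_one]

lemma lapMatrix_eq_lapMatrix_sdiff_edge_add {G : SimpleGraph V} [DecidableRel G.Adj] {a b : V}
    (hab : G.Adj a b) :
    G.lapMatrix R = (G \ edge a b).lapMatrix R +
      vecMulVec (Pi.single a 1 - Pi.single b 1) (Pi.single a 1 - Pi.single b 1) := by
  have hadj : G.adjMatrix R = (G \ edge a b).adjMatrix R + (single a b 1 + single b a 1) := by
    ext x y
    have hba := hab.symm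
    have hne := hab.ne
    simp only [adjMatrix_apply, sdiff_adj, edge_adj, Matrix.add_apply, single_apply]
    grind
  have hdeg : G.degMatrix R = (G \ edge a b).degMatrix R + (single a a 1 + single b b 1) := by
    simp only [degMatrix_eq_diagonal_adjMatrix_mulVec_one, hadj, add_mulVec, single_mulVec_eq,
      Pi.one_apply, mul_one, one_smul, ← diagonal_single, diagonal_add, Pi.add_def]
  simp only [lapMatrix, hadj, hdeg, sub_vecMulVec, vecMulVec_sub,
    ← single_eq_single_vecMulVec_single]
  abel

end LapMatrix

section ContractedLaplacian

variable {R V C C' : Type*} [CommRing R] [Fintype V] [DecidableEq V] [DecidableEq C]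
  [DecidableEq C'] (G : SimpleGraph V) [DecidableRel G.Adj] (f : V → C)

/-- The Laplacian of the multigraph obtained from `G` by identifying the vertices in each fiber of
`f`. Edges inside a fiber become loops, which do not contribute. -/
def contractedLaplacian (R : Type*) [Ring R] : Matrix C C R :=
  fiberMatrix R f * G.lapMatrix R * (fiberMatrix R f)ᵀ

lemma contractedLaplacian_comp [Fintype C] (g : C → C') :
    contractedLaplacian G (g ∘ f) R =
      fiberMatrix R g * contractedLaplacian G f R * (fiberMatrix R g)ᵀ := by
  simp only [contractedLaplacian, fiberMatrix_comp, transpose_mul, Matrix.mul_assoc]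

lemma contractedLaplacian_eq_contractedLaplacian_sdiff_edge_add {G : SimpleGraph V}
    [DecidableRel G.Adj] {a b : V} (hab : G.Adj a b) :
    contractedLaplacian G f R = contractedLaplacian (G \ edge a b) f R +
      vecMulVec (Pi.single (f a) 1 - Pi.single (f b) 1)
        (Pi.single (f a) 1 - Pi.single (f b) 1) := by
  simp only [contractedLaplacian, lapMatrix_eq_lapMatrix_sdiff_edge_add hab, Matrix.mul_add,
    Matrix.add_mul, mul_vecMulVec, vecMulVec_mul, vecMul_transpose, mulVec_sub,
    fiberMatrix_mulVec_single]

lemma contractedLaplacian_sdiff_edge_of_eq {G : SimpleGraph V} [DecidableRel G.Adj] {a b : V}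
    (hab : G.Adj a b) (hf : f a = f b) :
    contractedLaplacian (G \ edge a b) f R = contractedLaplacian G f R := by
  simp [contractedLaplacian_eq_contractedLaplacian_sdiff_edge_add f hab, hf]

lemma contractedLaplacian_eq_zero {G : SimpleGraph V} [DecidableRel G.Adj] {f : V → C}
    (hf : ∀ u v, G.Adj u v → f u = f v) : contractedLaplacian G f R = 0 := by
  suffices h : G.lapMatrix R * (fiberMatrix R f)ᵀ = 0 by
    rw [contractedLaplacian, Matrix.mul_assoc, h, Matrix.mul_zero]
  ext v x
  have hsum : ∑ u ∈ G.neighborFinset v, (fiberMatrix R f)ᵀ u x =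
      G.degree v * (fiberMatrix R f)ᵀ v x := by
    rw [← card_neighborFinset_eq_degree, ← nsmul_eq_mul]
    refine sum_eq_card_nsmul fun u hu => ?_
    simp [fiberMatrix, hf v u ((G.mem_neighborFinset v u).1 hu)]
  refine (G.lapMatrix_mulVec_apply v ((fiberMatrix R f)ᵀ.col x)).trans ?_
  simp only [col_apply, hsum, sub_self, Matrix.zero_apply]

lemma contractedLaplacian_eq_diagonal_sub [Fintype C] {W : Matrix C C R}
    (hW : fiberMatrix R f * G.adjMatrix R * (fiberMatrix R f)ᵀ = W) :
    contractedLaplacian G f R = diagonal (W *ᵥ 1) - W := by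
  have hone : (fiberMatrix R f)ᵀ *ᵥ 1 = 1 := by
    rw [fiberMatrix_transpose_mulVec, Pi.one_comp]
  rw [contractedLaplacian, lapMatrix, Matrix.mul_sub, Matrix.sub_mul, hW,
    degMatrix_eq_diagonal_adjMatrix_mulVec_one, fiberMatrix_mul_diagonal_mul_transpose, ← hW,
    ← mulVec_mulVec, ← mulVec_mulVec, hone]

lemma det_contractedLaplacian_deletion_contraction [Fintype C] {a b : V} (hab : G.Adj a b)
    (hf : f b ≠ f a) (u v : C → R) :
    (contractedLaplacian G f R + vecMulVec u v).det =
      (contractedLaplacian (G \ edge a b) f R + vecMulVec u v).det +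
      (contractedLaplacian G (mergeInto (f a) ⟨f b, hf⟩ ∘ f) R +
        vecMulVec (fiberMatrix R (mergeInto (f a) ⟨f b, hf⟩) *ᵥ u)
          (fiberMatrix R (mergeInto (f a) ⟨f b, hf⟩) *ᵥ v)).det := by
  set g := mergeInto (f a) ⟨f b, hf⟩
  have hg : (g ∘ f) a = (g ∘ f) b := mergeInto_eq_mergeInto_iff.2 (by simp)
  rw [← contractedLaplacian_sdiff_edge_of_eq (g ∘ f) hab hg, contractedLaplacian_comp,
    ← vecMul_transpose _ v, ← vecMulVec_mul, ← mul_vecMulVec, ← Matrix.add_mul, ← Matrix.mul_add,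
    ← det_add_vecMulVec_single_sub_single _ (f a) ⟨f b, hf⟩,
    contractedLaplacian_eq_contractedLaplacian_sdiff_edge_add f hab, add_right_comm]

end ContractedLaplacian

section SpanningTrees

variable {V C : Type*} {F G : SimpleGraph V} {f : V → C} {a b : V}

/-- The spanning trees of `G` containing all edges of `F`. -/
def spanningTreesContaining (F G : SimpleGraph V) : Set (SimpleGraph V) :=
  {T | F ≤ T ∧ T ≤ G ∧ T.IsTree}

lemma edge_le_iff_adj (hab : a ≠ b) : edge a b ≤ G ↔ G.Adj a b := by
  simp [hab]

lemma ncard_spanningTreesContaining_eq [Finite V] (F G : SimpleGraph V) (hab : a ≠ b) :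
    (spanningTreesContaining F G).ncard =
      (spanningTreesContaining F (G \ edge a b)).ncard +
        (spanningTreesContaining (F ⊔ edge a b) G).ncard := by
  have hdel : spanningTreesContaining F (G \ edge a b) =
      spanningTreesContaining F G \ {T | T.Adj a b} := by
    ext T
    simp only [spanningTreesContaining, Set.mem_ofPred_eq, Set.mem_sdiff, le_sdiff, disjoint_edge]
    tauto
  have hcontr : spanningTreesContaining (F ⊔ edge a b) G =
      spanningTreesContaining F G ∩ {T | T.Adj a b} := by
    ext T
    simp only [spanningTreesContaining, Set.mem_ofPred_eq, Set.mem_inter_iff, sup_le_iff,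
      edge_le_iff_adj hab]
    tauto
  rw [hdel, hcontr, add_comm, Set.ncard_inter_add_ncard_sdiff_eq_ncard]

lemma spanningTreesContaining_sup_edge_eq_empty (hab : a ≠ b) (hF : ¬ F.Adj a b)
    (hreach : F.Reachable a b) : spanningTreesContaining (F ⊔ edge a b) G = ∅ := by
  refine Set.eq_empty_of_forall_notMem fun T ⟨hFT, _, hT⟩ => ?_
  have hacyc := isAcyclic_sup_fromEdgeSet_iff.1 (hT.isAcyclic.anti hFT)
  exact (hacyc.2 hreach).elim hab hF

lemma spanningTreesContaining_self_of_isTree (hF : F.IsTree) :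
    spanningTreesContaining F F = {F} := by
  ext T
  exact ⟨fun ⟨hFT, hTF, _⟩ => hTF.antisymm hFT, by rintro rfl; exact ⟨le_rfl, le_rfl, hF⟩⟩

lemma spanningTreesContaining_self_of_not_isTree (hF : ¬ F.IsTree) :
    spanningTreesContaining F F = ∅ :=
  Set.eq_empty_of_forall_notMem fun _ ⟨hFT, hTF, hT⟩ => hF (hTF.antisymm hFT ▸ hT)

/-- The map `f` labels the connected components of `F`: its fibers are their vertex sets, and every
label is used. -/
structure IsComponentLabeling (F : SimpleGraph V) (f : V → C) : Prop where
  eq_iff_reachable (u v : V) : f u = f v ↔ F.Reachable u v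
  surjective : Function.Surjective f

namespace IsComponentLabeling

lemma isTree_iff_subsingleton [Nonempty V] (hf : IsComponentLabeling F f) (hF : F.IsAcyclic) :
    F.IsTree ↔ Subsingleton C := by
  refine ⟨fun hT => ⟨fun x y => ?_⟩, fun _ => ⟨⟨fun u v => ?_⟩, hF⟩⟩
  · obtain ⟨u, rfl⟩ := hf.surjective x
    obtain ⟨v, rfl⟩ := hf.surjective y
    exact (hf.eq_iff_reachable u v).2 (hT.connected.preconnected u v)
  · exact (hf.eq_iff_reachable u v).1 (Subsingleton.elim _ _)

lemma sup_edge [DecidableEq C] (hf : IsComponentLabeling F f) (hne : f b ≠ f a) :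
    IsComponentLabeling (F ⊔ edge a b) (mergeInto (f a) ⟨f b, hne⟩ ∘ f) where
  surjective := (mergeInto_surjective _ _).comp hf.surjective
  eq_iff_reachable u v := by
    have hab : (F ⊔ edge a b).Reachable a b :=
      Adj.reachable (Or.inr (by simp [edge_adj, ne_of_apply_ne f hne.symm]))
    have hmono {x y : V} (hxy : f x = f y) : (F ⊔ edge a b).Reachable x y :=
      ((hf.eq_iff_reachable x y).1 hxy).mono le_sup_left
    constructor
    · intro huv
      rcases mergeInto_eq_mergeInto_iff.1 huv with huv | ⟨hu, hv⟩ | ⟨hu, hv⟩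
      · exact hmono huv
      · exact ((hmono hu).trans hab).trans (hmono hv.symm)
      · exact ((hmono hu).trans hab.symm).trans (hmono hv.symm)
    · rintro ⟨p⟩
      induction p with
      | nil => rfl
      | cons hadj _ ih =>
        refine Eq.trans (mergeInto_eq_mergeInto_iff.2 ?_) ih
        rcases hadj with hF | hedge
        · exact Or.inl ((hf.eq_iff_reachable _ _).2 hF.reachable)
        · rcases ((edge_adj ..).1 hedge).1 with ⟨rfl, rfl⟩ | ⟨rfl, rfl⟩ <;> simp

end IsComponentLabeling

end SpanningTrees

section MatrixTree

variable {R V C : Type*} [CommRing R] [Nonempty V] [Fintype C] [DecidableEq C]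
  {F G : SimpleGraph V} {f : V → C}

lemma det_vecMulVec_eq_ncard_spanningTreesContaining_self (hF : F.IsAcyclic)
    (hf : IsComponentLabeling F f) (u v : C → R) :
    (vecMulVec u v).det =
      (spanningTreesContaining F F).ncard * ((∑ x, u x) * ∑ x, v x) := by
  cases subsingleton_or_nontrivial C with
  | inl h =>
    obtain ⟨r⟩ := ‹Nonempty V›
    have : Unique C := ⟨⟨f r⟩, fun _ => Subsingleton.elim _ _⟩
    rw [spanningTreesContaining_self_of_isTree ((hf.isTree_iff_subsingleton hF).2 h), det_unique]
    simp [vecMulVec_apply]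
  | inr h =>
    have hnot : ¬ F.IsTree := fun hT =>
      not_subsingleton C ((hf.isTree_iff_subsingleton hF).1 hT)
    rw [spanningTreesContaining_self_of_not_isTree hnot, det_vecMulVec]
    simp

/-- The **matrix-tree theorem** for the spanning trees of `G` containing a spanning forest `F`, by
induction on `G \ F`: deleting an edge from `G` and adding it to `F` both remove it from `G \ F`. -/
theorem det_contractedLaplacian_add_vecMulVec [Fintype V] [DecidableEq V] [DecidableRel G.Adj]
    (hFG : F ≤ G) (hF : F.IsAcyclic) (hf : IsComponentLabeling F f) (u v : C → R) :
    (contractedLaplacian G f R + vecMulVec u v).det =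
      (spanningTreesContaining F G).ncard * ((∑ x, u x) * ∑ x, v x) := by
  induction hH : G \ F using WellFoundedLT.induction generalizing C F G with
  | _ H ih =>
  subst hH
  by_cases hGF : G ≤ F
  · obtain rfl := hFG.antisymm hGF
    rw [contractedLaplacian_eq_zero fun x y h => (hf.eq_iff_reachable x y).2 h.reachable,
      zero_add, det_vecMulVec_eq_ncard_spanningTreesContaining_self hF hf]
  obtain ⟨a, b, hGab, hFab⟩ : ∃ a b, G.Adj a b ∧ ¬ F.Adj a b := by
    by_contra! h
    exact hGF fun x y => h x y
  have hab := hGab.ne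
  have hlt : (G \ F) \ edge a b < G \ F :=
    sdiff_lt ((edge_le_iff_adj hab).2 ⟨hGab, hFab⟩) fun h => by
      simpa [h] using (edge_le_iff_adj hab).1 le_rfl
  have hdel := ih _ hlt (le_sdiff.2 ⟨hFG, (disjoint_edge _).2 hFab⟩) hF hf u v (sdiff_right_comm ..)
  rw [ncard_spanningTreesContaining_eq F G hab]
  by_cases hfab : f b = f a
  · rw [spanningTreesContaining_sup_edge_eq_empty hab hFab
      ((hf.eq_iff_reachable a b).1 hfab.symm), Set.ncard_empty, add_zero, ← hdel,
      contractedLaplacian_sdiff_edge_of_eq f hGab hfab.symm]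
  · have hFreach : ¬ F.Reachable a b := fun h => hfab ((hf.eq_iff_reachable a b).2 h).symm
    have hcontr := ih _ hlt (sup_le hFG ((edge_le_iff_adj hab).2 hGab))
      (hF.sup_edge_of_not_reachable hFreach) (hf.sup_edge hfab)
      (fiberMatrix R (mergeInto (f a) ⟨f b, hfab⟩) *ᵥ u)
      (fiberMatrix R (mergeInto (f a) ⟨f b, hfab⟩) *ᵥ v) sdiff_sdiff_left.symm
    rw [sum_fiberMatrix_mulVec, sum_fiberMatrix_mulVec] at hcontr
    rw [det_contractedLaplacian_deletion_contraction G f hGab hfab, hdel, hcontr]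
    push_cast
    ring

end MatrixTree

lemma sum_natCard_subtype_and_eq {V C : Type*} [Finite V] [Fintype C] (p : V → Prop)
    (f : V → C) :
    ∑ x, Nat.card {v // p v ∧ f v = x} = Nat.card {v // p v} := by
  classical
  have := Fintype.ofFinite V
  simp only [Nat.card_eq_fintype_card, Fintype.card_subtype, ← filter_filter]
  exact (card_eq_sum_card_fiberwise fun _ _ => mem_univ _).symm

lemma lt_sum_of_forall_pos {ι M : Type*} [Fintype ι] [Nontrivial ι] [AddCommMonoid M]
    [PartialOrder M] [IsOrderedCancelAddMonoid M] {x : ι → M} (hx : ∀ i, 0 < x i) (i : ι) :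
    x i < ∑ k, x k := by
  obtain ⟨k, hk⟩ := exists_ne i
  exact single_lt_sum hk (mem_univ i) (mem_univ k) (hx k) fun j _ _ => (hx j).le

lemma adjMatrix_completeMultipartiteGraph {R ι : Type*} [Ring R] [Fintype ι] [DecidableEq ι]
    {V : ι → Type*} [DecidableRel (completeMultipartiteGraph V).Adj] :
    (completeMultipartiteGraph V).adjMatrix R =
      (fiberMatrix R (Sigma.fst (β := V)))ᵀ *
        (of (fun _ _ => 1) - fiberMatrix R (Sigma.fst (β := V))) := by
  ext v w
  rw [mul_apply]
  by_cases h : v.1 = w.1 <;> simp [fiberMatrix, h, eq_comm]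

section Multipartite

variable {s c : ℕ} (n : Fin s → ℕ) (comp : (Σ i, Fin (n i)) → Fin c)

/-- The matrix with `(p, i)` entry `n_{ip}`, the number of vertices of component `p` in class
`i`. -/
noncomputable def insideClass : Matrix (Fin c) (Fin s) ℝ :=
  of fun p i => nIP n comp i p

/-- The matrix with `(i, p)` entry `m_p − n_{ip}`, the number of vertices of component `p` outside
class `i`. -/
noncomputable def outsideClass : Matrix (Fin s) (Fin c) ℝ :=
  of fun i p => mP n comp p - nIP n comp i p

lemma insideClass_eq_fiberMatrix_mul_transpose :
    insideClass n comp =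
      fiberMatrix ℝ comp * (fiberMatrix ℝ (Sigma.fst (β := fun i => Fin (n i))))ᵀ := by
  ext p i
  rw [fiberMatrix_mul_transpose_apply, insideClass, of_apply, nIP]
  simp only [and_comm]

lemma outsideClass_eq_mul_fiberMatrix_transpose :
    outsideClass n comp =
      (of (fun _ _ => 1) - fiberMatrix ℝ (Sigma.fst (β := fun i => Fin (n i)))) *
        (fiberMatrix ℝ comp)ᵀ := by
  ext i p
  have hm : ((of fun _ _ => 1 : Matrix (Fin s) (Σ i, Fin (n i)) ℝ) * (fiberMatrix ℝ comp)ᵀ) i p =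
      mP n comp p := by
    rw [mP, ← fiberMatrix_mulVec_one_apply]
    simp [mul_apply, mulVec, dotProduct]
  rw [Matrix.sub_mul, Matrix.sub_apply, hm, fiberMatrix_mul_transpose_apply]
  rfl

lemma sum_nIP_left (p : Fin c) : ∑ i, (nIP n comp i p : ℝ) = mP n comp p := by
  rw [mP, ← sum_natCard_subtype_and_eq _ Sigma.fst, Nat.cast_sum]
  simp only [nIP, and_comm]

lemma sum_nIP_right (i : Fin s) : ∑ p, (nIP n comp i p : ℝ) = n i := by
  rw [← Nat.cast_sum]
  simp only [nIP]
  rw [sum_natCard_subtype_and_eq, Nat.card_congr (Equiv.sigmaSubtype i), Nat.card_fin]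

lemma sum_mP : ∑ p, (mP n comp p : ℝ) = ∑ i, (n i : ℝ) := by
  simp only [← sum_nIP_left, ← sum_nIP_right n comp]
  exact sum_comm

lemma sum_mP_sub_nIP (i : Fin s) :
    ∑ p, ((mP n comp p : ℝ) - nIP n comp i p) = (∑ k, (n k : ℝ)) - n i := by
  rw [sum_sub_distrib, sum_mP, sum_nIP_right]

lemma alphaR_eq_sum (p : Fin c) :
    alphaR n comp p = ∑ i, ((∑ k, (n k : ℝ)) - n i) * nIP n comp i p := by
  simp only [alphaR, sub_mul, sum_sub_distrib, ← mul_sum, sum_nIP_left]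

variable {n comp} in
lemma alphaR_pos (hn : ∀ i, (n i : ℝ) < ∑ k, (n k : ℝ)) (hsurj : Function.Surjective comp)
    (p : Fin c) : 0 < alphaR n comp p := by
  obtain ⟨v, hv⟩ := hsurj p
  have : Nonempty {w : Σ i, Fin (n i) // w.1 = v.1 ∧ comp w = p} := ⟨⟨v, rfl, hv⟩⟩
  rw [alphaR_eq_sum]
  exact sum_pos' (fun i _ => mul_nonneg (sub_pos.2 (hn i)).le (Nat.cast_nonneg _))
    ⟨v.1, mem_univ _, mul_pos (sub_pos.2 (hn _)) (Nat.cast_pos.2 Nat.card_pos)⟩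

lemma contractedLaplacian_completeMultipartiteGraph
    [DecidableRel (completeMultipartiteGraph fun i => Fin (n i)).Adj] :
    contractedLaplacian (completeMultipartiteGraph fun i => Fin (n i)) comp ℝ =
      diagonal (alphaR n comp) - insideClass n comp * outsideClass n comp := by
  have hW : fiberMatrix ℝ comp * (completeMultipartiteGraph fun i => Fin (n i)).adjMatrix ℝ *
      (fiberMatrix ℝ comp)ᵀ = insideClass n comp * outsideClass n comp := by
    rw [adjMatrix_completeMultipartiteGraph, insideClass_eq_fiberMatrix_mul_transpose,
      outsideClass_eq_mul_fiberMatrix_transpose]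
    simp only [Matrix.mul_assoc]
  have hrow : (insideClass n comp * outsideClass n comp) *ᵥ 1 = alphaR n comp := by
    ext p
    rw [← mulVec_mulVec, alphaR_eq_sum]
    simp only [insideClass, outsideClass, mulVec, dotProduct, of_apply, Pi.one_apply, mul_one,
      sum_mP_sub_nIP, mul_comm]
  rw [contractedLaplacian_eq_diagonal_sub _ _ hW, hrow]

variable {n comp} in
lemma Zzero_eq_one_sub_mul (hα : ∀ p, alphaR n comp p ≠ 0) :
    Zzero n comp =
      1 - outsideClass n comp * (diagonal (alphaR n comp))⁻¹ * insideClass n comp := by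
  have hinv : (diagonal (alphaR n comp))⁻¹ = diagonal (alphaR n comp)⁻¹ :=
    inv_eq_right_inv (by simp [hα])
  rw [Zzero, hinv]
  congr 1
  ext i j
  rw [mul_apply]
  simp only [mul_diagonal, outsideClass, insideClass, of_apply, Pi.inv_apply]
  exact sum_congr rfl fun p _ => by ring

end Multipartite

/-- Main theorem: the number of spanning trees of `K_{n_1,…,n_s}` containing a spanning forest
`F` with `c` components is `τ_F = (C_{ij}/(n_i(n − n_j))) · ∏_p α_p` for any `i, j`, where
the `(i,j)` cofactor `C_{ij}` of `Z(0)` is the `(j,i)` entry of its adjugate. -/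
theorem stmt_16 (s : ℕ) (hs : 2 ≤ s) (n : Fin s → ℕ) (hn : ∀ i, 1 ≤ n i)
    (F : SimpleGraph (Σ i, Fin (n i)))
    (hFG : F ≤ SimpleGraph.completeMultipartiteGraph (fun i => Fin (n i)))
    (hF : F.IsAcyclic)
    (c : ℕ) (comp : (Σ i, Fin (n i)) → Fin c)
    (hcomp : ∀ u v, comp u = comp v ↔ F.Reachable u v)
    (hsurj : Function.Surjective comp) :
    ∀ i j : Fin s,
      ((Nat.card {T : SimpleGraph (Σ i, Fin (n i)) //
      F ≤ T ∧ T ≤ SimpleGraph.completeMultipartiteGraph (fun i => Fin (n i)) ∧ T.IsTree} : ℕ) : ℝ)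
        = (Zzero n comp).adjugate j i / ((n i : ℝ) * ((∑ k, (n k : ℝ)) - (n j : ℝ))) *
            ∏ p, alphaR n comp p := by
  classical
  intro i j
  have : Nonempty (Σ i, Fin (n i)) := ⟨⟨i, ⟨0, hn i⟩⟩⟩
  have : Nontrivial (Fin s) := Fin.nontrivial_iff_two_le.2 hs
  have hpos (k : Fin s) : (0 : ℝ) < n k := Nat.cast_pos.2 (hn k)
  have hlt := lt_sum_of_forall_pos hpos
  have hα (p : Fin c) := (alphaR_pos hlt hsurj p).ne'
  have hdet := det_contractedLaplacian_add_vecMulVec (R := ℝ) hFG hF ⟨hcomp, hsurj⟩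
  rw [contractedLaplacian_completeMultipartiteGraph] at hdet
  have hunit : IsUnit (diagonal (alphaR n comp)).det := by
    simp [prod_eq_zero_iff, hα]
  have hadj := adjugate_one_sub_mul_det hunit (by simpa using hdet 0 0) j i
  rw [hdet, ← Zzero_eq_one_sub_mul hα, det_diagonal] at hadj
  simp only [col_apply, row_apply, insideClass, outsideClass, of_apply, sum_nIP_right,
    sum_mP_sub_nIP] at hadj
  rw [div_mul_eq_mul_div, hadj, eq_div_iff (mul_pos (hpos i) (sub_pos.2 (hlt j))).ne']
  rfl
end

section
/- For a spanning forest F of the complete bipartite graph K_{n_1,n_2} with components T_1,...,T_c, the number of spanning trees containing F equals (1/(n_1 n_2)) · (Π_{p=1}^c (n_{1p}n_2 + n_{2p}n_1)) · (1 − Σ_{p=1}^c n_{1p}n_{2p}/(n_{1p}n_2 + n_{2p}n_1)). -/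
open Finset

/-- `n_{1p} = |X_1 ∩ V(T_p)|` in the complete bipartite graph `K_{n_1,n_2}`. -/
noncomputable def n1P {n1 n2 c : ℕ} (comp : Fin n1 ⊕ Fin n2 → Fin c) (p : Fin c) : ℕ :=
  Nat.card {a : Fin n1 // comp (Sum.inl a) = p}

/-- `n_{2p} = |X_2 ∩ V(T_p)|` in the complete bipartite graph `K_{n_1,n_2}`. -/
noncomputable def n2P {n1 n2 c : ℕ} (comp : Fin n1 ⊕ Fin n2 → Fin c) (p : Fin c) : ℕ :=
  Nat.card {b : Fin n2 // comp (Sum.inr b) = p}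

/-!
Let `τ(F)` be the number of spanning trees containing `F`, a forest with `c` components. A spanning
tree containing `F` has exactly `c - 1` edges joining distinct components of `F`, so counting pairs
(tree, such edge) in two ways gives `(c - 1) τ(F) = ∑ e, τ(F + e)` over the edges `e` of the ambient
graph joining distinct components. Adding `e` merges two components, so for `K_{x,y}` this recursion
determines `τ` from its value `1` at trees.

The closed formula satisfies the same recursion. With `A p` left and `B p` right vertices in the
component `p`, put `w p = A p * y + B p * x`, `a p = A p / w p` and `b p = B p / w p`, so that
`a p * y + b p * x = 1`. Merging `p` and `q` replaces `w p` and `w q` by their sum, and the formula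
for the merged sizes is that for the original ones with the factor `1 - ∑ r, A r * b r` replaced by
`(1 - ∑ r, A r * b r) * (1 / w p + 1 / w q) + (a p - a q) * (b p - b q)`; summing this against
`A p * B q` uses only `∑ A p = x`, `∑ B p = y` and the normalization.
-/

section PartSizes

/-- If part `p` has `A p` vertices on the left and `B p` on the right of `K_{x,y}`, this is the
number `A p * y + B p * x` of edge ends at that part, i.e. the sum of its vertex degrees. -/
def partDegree {ι R : Type*} [Semiring R] (A B : ι → R) (x y : R) (p : ι) : R :=
  A p * y + B p * x

/-- The part sizes after part `q` is absorbed into part `p`; the entry at `q` is then stale, and the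
index `q` is to be erased. -/
def mergeSizes {ι R : Type*} [Add R] [DecidableEq ι] (A : ι → R) (p q : ι) : ι → R :=
  Function.update A p (A p + A q)

lemma partDegree_mergeSizes_self {ι R : Type*} [Semiring R] [DecidableEq ι] (A B : ι → R)
    (x y : R) (p q : ι) :
    partDegree (mergeSizes A p q) (mergeSizes B p q) x y p =
      partDegree A B x y p + partDegree A B x y q := by
  simp only [partDegree, mergeSizes, Function.update_self, add_mul, add_add_add_comm]

variable {ι K : Type*} [Field K]

/-- The right-hand side of the Dong–Ge formula for the complete bipartite graph `K_{x,y}` and a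
forest whose components are indexed by `P`, with `A p` left and `B p` right vertices. -/
def dongGeFormula (P : Finset ι) (A B : ι → K) (x y : K) : K :=
  1 / (x * y) * (∏ p ∈ P, partDegree A B x y p) * (1 - ∑ p ∈ P, A p * B p / partDegree A B x y p)

lemma dongGeFormula_congr {P : Finset ι} {A A' B B' : ι → K} (x y : K)
    (hA : ∀ p ∈ P, A p = A' p) (hB : ∀ p ∈ P, B p = B' p) :
    dongGeFormula P A B x y = dongGeFormula P A' B' x y := by
  have hdeg : ∀ p ∈ P, partDegree A B x y p = partDegree A' B' x y p := fun p hp ↦ by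
    rw [partDegree, partDegree, hA p hp, hB p hp]
  rw [dongGeFormula, dongGeFormula, prod_congr rfl hdeg,
    sum_congr rfl fun p hp ↦ by rw [hA p hp, hB p hp, hdeg p hp]]

lemma dongGeFormula_singleton [CharZero K] (A B : ι → K) (p : ι) (hA : A p ≠ 0) (hB : B p ≠ 0) :
    dongGeFormula {p} A B (A p) (B p) = 1 := by
  rw [dongGeFormula, prod_singleton, sum_singleton, partDegree]
  field_simp
  ring

lemma dongGeFormula_mergeSizes [DecidableEq ι] {P : Finset ι} {A B : ι → K} {x y : K} {p q : ι}
    (hp : p ∈ P) (hq : q ∈ P) (hpq : p ≠ q)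
    (hdp : partDegree A B x y p ≠ 0) (hdq : partDegree A B x y q ≠ 0)
    (hdpq : partDegree A B x y p + partDegree A B x y q ≠ 0) :
    dongGeFormula (P.erase q) (mergeSizes A p q) (mergeSizes B p q) x y =
      1 / (x * y) * (∏ r ∈ P, partDegree A B x y r) *
        ((1 - ∑ r ∈ P, A r * B r / partDegree A B x y r) *
            (1 / partDegree A B x y p + 1 / partDegree A B x y q) +
          (A p / partDegree A B x y p - A q / partDegree A B x y q) *
            (B p / partDegree A B x y p - B q / partDegree A B x y q)) := by
  have hp' : p ∈ P.erase q := mem_erase.2 ⟨hpq, hp⟩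
  have hrest (C : ι → K) : ∀ r ∈ (P.erase q).erase p, mergeSizes C p q r = C r :=
    fun r hr ↦ Function.update_of_ne (ne_of_mem_erase hr) _ _
  have hdeg : ∀ r ∈ (P.erase q).erase p,
      partDegree (mergeSizes A p q) (mergeSizes B p q) x y r = partDegree A B x y r :=
    fun r hr ↦ by simp only [partDegree, hrest _ r hr]
  rw [dongGeFormula, ← mul_prod_erase _ _ hp', ← add_sum_erase _ _ hp', prod_congr rfl hdeg,
    sum_congr rfl fun r hr ↦ by rw [hrest A r hr, hrest B r hr, hdeg r hr],
    partDegree_mergeSizes_self, ← mul_prod_erase P _ hq, ← mul_prod_erase _ _ hp',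
    ← add_sum_erase P _ hq, ← add_sum_erase _ _ hp']
  simp only [mergeSizes, Function.update_self]
  field_simp
  ring

end PartSizes

section NormalizedSizes

variable {ι R : Type*} [CommRing R] {P : Finset ι} {A B a b : ι → R} {x y : R}

lemma mul_sum_mul_of_unit (hunit : ∀ p ∈ P, a p * y + b p * x = 1) (hA : ∑ p ∈ P, A p = x) :
    y * ∑ p ∈ P, A p * a p = x * (1 - ∑ p ∈ P, A p * b p) := by
  have hsplit : ∑ p ∈ P, A p = y * ∑ p ∈ P, A p * a p + x * ∑ p ∈ P, A p * b p := by
    rw [mul_sum, mul_sum, ← sum_add_distrib]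
    exact sum_congr rfl fun p hp ↦ by linear_combination -A p * hunit p hp
  linear_combination hA - hsplit

lemma sum_sum_mul_sub_mul_sub [IsDomain R] (hx : x ≠ 0) (hy : y ≠ 0)
    (hunit : ∀ p ∈ P, a p * y + b p * x = 1) (hcross : ∀ p ∈ P, A p * b p = B p * a p)
    (hA : ∑ p ∈ P, A p = x) (hB : ∑ p ∈ P, B p = y) :
    ∑ p ∈ P, ∑ q ∈ P, A p * B q * ((a p - a q) * (b p - b q)) =
      (1 - ∑ p ∈ P, A p * b p) * (2 * ∑ p ∈ P, A p * b p - 1) := by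
  set S := ∑ p ∈ P, A p * b p
  have hBa : ∑ p ∈ P, B p * a p = S := (sum_congr rfl hcross).symm
  have hAa : y * ∑ p ∈ P, A p * a p = x * (1 - S) := mul_sum_mul_of_unit hunit hA
  have hBb : x * ∑ p ∈ P, B p * b p = y * (1 - S) := by
    rw [mul_sum_mul_of_unit (fun p hp ↦ (add_comm _ _).trans (hunit p hp)) hB, hBa]
  have hprod : (∑ p ∈ P, A p * a p) * ∑ p ∈ P, B p * b p = (1 - S) ^ 2 :=
    mul_left_cancel₀ (mul_ne_zero hx hy) <| by
      linear_combination (x * ∑ p ∈ P, B p * b p) * hAa + x * (1 - S) * hBb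
  have hSunit : y * ∑ p ∈ P, A p * a p * b p + x * ∑ p ∈ P, B p * a p * b p = S := by
    rw [mul_sum, mul_sum, ← sum_add_distrib]
    exact sum_congr rfl fun p hp ↦ by
      linear_combination A p * b p * hunit p hp - x * b p * hcross p hp
  have hexpand : ∀ p q, A p * B q * ((a p - a q) * (b p - b q)) =
      A p * a p * b p * B q - A p * a p * (B q * b q) - A p * b p * (B q * a q) +
        A p * (B q * a q * b q) := fun p q ↦ by ring
  simp only [hexpand, sum_add_distrib, sum_sub_distrib, ← mul_sum, ← sum_mul, hA, hB, hBa]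
  linear_combination hSunit - hprod

lemma sum_mul_add_sum_mul_eq_card (hunit : ∀ p ∈ P, a p * y + b p * x = 1) :
    (∑ p ∈ P, a p) * y + (∑ p ∈ P, b p) * x = #P := by
  rw [sum_mul, sum_mul, ← sum_add_distrib, sum_congr rfl hunit, sum_const, nsmul_one]

end NormalizedSizes

theorem sum_sum_dongGeFormula_mergeSizes {ι K : Type*} [DecidableEq ι] [Field K] [PartialOrder K]
    [IsStrictOrderedRing K] {P : Finset ι} {A B : ι → K} {x y : K}
    (hx : x ≠ 0) (hy : y ≠ 0) (hdeg : ∀ p ∈ P, 0 < partDegree A B x y p)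
    (hA : ∑ p ∈ P, A p = x) (hB : ∑ p ∈ P, B p = y) :
    ∑ p ∈ P, ∑ q ∈ P, (if p = q then 0 else
        A p * B q * dongGeFormula (P.erase q) (mergeSizes A p q) (mergeSizes B p q) x y) =
      (#P - 1) * dongGeFormula P A B x y := by
  let a : ι → K := fun p ↦ A p / partDegree A B x y p
  let b : ι → K := fun p ↦ B p / partDegree A B x y p
  set S := ∑ p ∈ P, A p * b p
  set c := 1 / (x * y) * ∏ p ∈ P, partDegree A B x y p
  have hcross : ∀ p ∈ P, A p * b p = B p * a p := fun p _ ↦ mul_div_left_comm _ _ _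
  have hunit : ∀ p ∈ P, a p * y + b p * x = 1 := fun p hp ↦ by
    rw [div_mul_eq_mul_div, div_mul_eq_mul_div, ← add_div]
    exact div_self (hdeg p hp).ne'
  have hABS : ∑ p ∈ P, A p * B p / partDegree A B x y p = S :=
    sum_congr rfl fun p _ ↦ mul_div_assoc _ _ _
  have hterm : ∀ p ∈ P, ∀ q ∈ P, (if p = q then 0 else
        A p * B q * dongGeFormula (P.erase q) (mergeSizes A p q) (mergeSizes B p q) x y) =
      c * ((1 - S) * (a p * B q + A p * b q)) + c * (A p * B q * ((a p - a q) * (b p - b q))) -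
        if p = q then c * ((1 - S) * (2 * (A p * b p))) else 0 := by
    intro p hp q hq
    split_ifs with hpq
    · subst hpq
      linear_combination c * (1 - S) * hcross p hp
    · rw [dongGeFormula_mergeSizes hp hq hpq (hdeg p hp).ne' (hdeg q hq).ne'
        (add_pos (hdeg p hp) (hdeg q hq)).ne', hABS]
      simp only [a, b]
      ring
  rw [sum_congr rfl fun p hp ↦ sum_congr rfl (hterm p hp)]
  simp only [sum_sub_distrib, sum_add_distrib, ← mul_sum, ← sum_mul, sum_ite_eq, sum_ite_mem,
    inter_self, hA, hB]
  rw [sum_sum_mul_sub_mul_sub hx hy hunit hcross hA hB, dongGeFormula, hABS]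
  linear_combination c * (1 - S) * sum_mul_add_sum_mul_eq_card hunit

section ComponentLabelling

variable {V ι : Type*} {F T : SimpleGraph V} {f : V → ι}

/-- The fibres of `f` are the vertex sets of the connected components of `F`. -/
def IsComponentLabelling (F : SimpleGraph V) (f : V → ι) : Prop :=
  ∀ u v, f u = f v ↔ F.Reachable u v

/-- The relabelling that renames `q` to `p`. -/
def mergeLabels [DecidableEq ι] (p q : ι) : ι → ι :=
  Function.update id q p

lemma mergeLabels_apply [DecidableEq ι] (p q i : ι) :
    mergeLabels p q i = if i = q then p else i :=
  Function.update_apply _ _ _ _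

lemma image_mergeLabels [DecidableEq ι] {p q : ι} {s : Finset ι} (hpq : p ≠ q) (hp : p ∈ s) :
    s.image (mergeLabels p q) = s.erase q := by
  ext i
  simp only [mem_image, mem_erase, mergeLabels_apply]
  grind

namespace IsComponentLabelling

lemma isTree [Fintype V] [DecidableEq ι] (hf : IsComponentLabelling F f) (hF : F.IsAcyclic)
    (hcard : #(univ.image f) = 1) : F.IsTree := by
  have : Nonempty V := univ_nonempty_iff.1 (image_nonempty.1 (card_pos.1 (hcard ▸ one_pos)))
  have hconn : F.Preconnected := fun u v ↦ (hf u v).1 <|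
    card_le_one.1 hcard.le _ (mem_image_of_mem f (mem_univ u)) _ (mem_image_of_mem f (mem_univ v))
  exact ⟨⟨hconn⟩, hF⟩

lemma sup_edge [DecidableEq ι] (hf : IsComponentLabelling F f) (u v : V) :
    IsComponentLabelling (F ⊔ SimpleGraph.edge u v) (mergeLabels (f u) (f v) ∘ f) := by
  have hle : F ≤ F ⊔ SimpleGraph.edge u v := le_sup_left
  have huv : (F ⊔ SimpleGraph.edge u v).Reachable u v := by
    by_cases h : u = v
    · exact h ▸ .rfl
    · exact SimpleGraph.Adj.reachable (.inr ((SimpleGraph.edge_adj ..).2 ⟨.inl ⟨rfl, rfl⟩, h⟩))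
  intro a b
  simp only [Function.comp_apply, mergeLabels_apply]
  constructor
  · have hrepr (c : V) : ∃ d, f d = (if f c = f v then f u else f c) ∧
        (F ⊔ SimpleGraph.edge u v).Reachable c d := by
      split_ifs with hc
      · exact ⟨u, rfl, (((hf c v).1 hc).mono hle).trans huv.symm⟩
      · exact ⟨c, rfl, .rfl⟩
    obtain ⟨a', ha', haa'⟩ := hrepr a
    obtain ⟨b', hb', hbb'⟩ := hrepr b
    rw [← ha', ← hb']
    exact fun h ↦ haa'.trans ((((hf a' b').1 h).mono hle).trans hbb'.symm)
  · rintro ⟨p⟩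
    induction p with
    | nil => rfl
    | @cons a c b hac _ ih =>
      refine Eq.trans ?_ ih
      rcases hac with hac | hac
      · rw [(hf a c).2 hac.reachable]
      · rw [SimpleGraph.edge_adj] at hac
        rcases hac with ⟨⟨rfl, rfl⟩ | ⟨rfl, rfl⟩, -⟩ <;> simp

lemma card_edgeFinset_add_card_image [Fintype V] [DecidableEq ι] [Fintype F.edgeSet]
    (hf : IsComponentLabelling F f) (hF : F.IsAcyclic) :
    #F.edgeFinset + #(univ.image f) = Fintype.card V := by
  classical
  induction hcard : #(univ.image f) generalizing F f with
  | zero =>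
    have : IsEmpty V := univ_eq_empty_iff.1 (image_eq_empty.1 (card_eq_zero.1 hcard))
    simp [Subsingleton.elim F ⊥]
  | succ k ih =>
    obtain rfl | hk := Nat.eq_zero_or_pos k
    · exact (hf.isTree hF hcard).card_edgeFinset
    · obtain ⟨_, hp, _, hq, hpq⟩ := one_lt_card.1 (show 1 < #(univ.image f) by omega)
      obtain ⟨⟨u, -, rfl⟩, v, -, rfl⟩ := And.intro (mem_image.1 hp) (mem_image.1 hq)
      have huv : ¬ F.Reachable u v := fun h ↦ hpq ((hf u v).2 h)
      have hforest := ih (hf.sup_edge u v) (hF.sup_edge_of_not_reachable huv) (by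
        rw [← image_image, image_mergeLabels hpq hp, card_erase_of_mem hq, hcard,
          Nat.add_sub_cancel])
      rw [F.card_edgeFinset_sup_edge (fun h ↦ huv h.reachable) fun h ↦ hpq (congrArg f h)]
        at hforest
      rw [add_right_comm, add_assoc] at hforest
      convert hforest

end IsComponentLabelling

lemma reachable_iff_adj_of_le_of_isAcyclic (hT : T.IsAcyclic) (hFT : F ≤ T)
    {u v : V} (huv : T.Adj u v) : F.Reachable u v ↔ F.Adj u v := by
  refine ⟨fun hr ↦ by_contra fun hn ↦ ?_, SimpleGraph.Adj.reachable⟩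
  have hle : F ≤ T.deleteEdges {s(u, v)} := fun a b hab ↦ by
    rw [SimpleGraph.deleteEdges_adj, Set.mem_singleton_iff]
    refine ⟨hFT hab, fun h ↦ hn ?_⟩
    rwa [← SimpleGraph.mem_edgeSet, ← h]
  exact SimpleGraph.isBridge_iff.1 (SimpleGraph.isAcyclic_iff_forall_adj_isBridge.1 hT huv)
    (hr.mono hle)

namespace IsComponentLabelling

lemma card_filter_edgeFinset_add_one [Fintype V] [DecidableEq ι] [Fintype T.edgeSet]
    (hf : IsComponentLabelling F f) (hFT : F ≤ T) (hT : T.IsTree) :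
    #{e ∈ T.edgeFinset | ¬ (e.map f).IsDiag} + 1 = #(univ.image f) := by
  classical
  have hinner : {e ∈ T.edgeFinset | (e.map f).IsDiag} = F.edgeFinset := by
    ext e
    induction e with | _ u v
    simp only [mem_filter, SimpleGraph.mem_edgeFinset, SimpleGraph.mem_edgeSet, Sym2.map_mk,
      Sym2.mk_isDiag_iff, hf u v]
    exact ⟨fun ⟨h, hr⟩ ↦ (reachable_iff_adj_of_le_of_isAcyclic hT.isAcyclic hFT h).1 hr,
      fun h ↦ ⟨hFT h, h.reachable⟩⟩
  have hforest := hf.card_edgeFinset_add_card_image (hT.isAcyclic.anti hFT)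
  have htree := hT.card_edgeFinset
  have hsplit := card_filter_add_card_filter_not (s := T.edgeFinset) fun e ↦ (e.map f).IsDiag
  rw [hinner] at hsplit
  omega

end IsComponentLabelling

end ComponentLabelling

/-- The number of spanning trees of `G` containing `F`. -/
noncomputable def spanningTreeCount {V : Type*} (G F : SimpleGraph V) : ℕ :=
  Nat.card {T : SimpleGraph V // F ≤ T ∧ T ≤ G ∧ T.IsTree}

section SpanningTreeCount

variable {V ι : Type*} {G F : SimpleGraph V} {f : V → ι}

lemma spanningTreeCount_of_isTree (hFG : F ≤ G) (hF : F.IsTree) : spanningTreeCount G F = 1 := by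
  have hunique (T : SimpleGraph V) (hFT : F ≤ T) (hT : T.IsTree) : T = F :=
    le_antisymm ((SimpleGraph.isTree_iff_minimal_connected.1 hT).2 hF.connected hFT) hFT
  rw [spanningTreeCount, Nat.card_eq_one_iff_unique]
  exact ⟨⟨fun S T ↦ Subtype.ext <| (hunique S S.2.1 S.2.2.2).trans (hunique T T.2.1 T.2.2.2).symm⟩,
    ⟨⟨F, le_rfl, hFG, hF⟩⟩⟩

theorem sum_spanningTreeCount_sup_fromEdgeSet [Fintype V] [DecidableEq ι] [Fintype G.edgeSet]
    (hf : IsComponentLabelling F f) :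
    ∑ e ∈ G.edgeFinset with ¬ (e.map f).IsDiag, spanningTreeCount G (F ⊔ .fromEdgeSet {e}) +
      spanningTreeCount G F = #(univ.image f) * spanningTreeCount G F := by
  classical
  have hcount (H : SimpleGraph V) :
      spanningTreeCount G H = #{T : SimpleGraph V | H ≤ T ∧ T ≤ G ∧ T.IsTree} := by
    rw [spanningTreeCount, Nat.card_eq_fintype_card, Fintype.card_subtype]
  set trees : Finset (SimpleGraph V) := {T | F ≤ T ∧ T ≤ G ∧ T.IsTree}
  set crossing : Finset (Sym2 V) := {e ∈ G.edgeFinset | ¬ (e.map f).IsDiag}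
  have habove : ∀ e ∈ crossing, spanningTreeCount G (F ⊔ .fromEdgeSet {e}) =
      #(trees.bipartiteAbove (fun e T ↦ e ∈ T.edgeSet) e) := fun e he ↦ by
    have hdiag : ¬ e.IsDiag := fun h ↦ (mem_filter.1 he).2 h.map
    rw [hcount, bipartiteAbove, filter_filter]
    congr! 2 with T
    rw [sup_le_iff, SimpleGraph.fromEdgeSet_le, sdiff_eq_left.2 (by simpa using hdiag),
      Set.singleton_subset_iff]
    tauto
  have hbelow : ∀ T ∈ trees,
      #(crossing.bipartiteBelow (fun e T ↦ e ∈ T.edgeSet) T) + 1 = #(univ.image f) := fun T hT ↦ by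
    obtain ⟨-, hFT, hTG, hTree⟩ := mem_filter.1 hT
    rw [← hf.card_filter_edgeFinset_add_one hFT hTree, bipartiteBelow, filter_filter]
    congr 2
    ext e
    have := @SimpleGraph.edgeSet_mono _ _ _ hTG e
    simp only [mem_filter, SimpleGraph.mem_edgeFinset]
    tauto
  calc ∑ e ∈ crossing, spanningTreeCount G (F ⊔ .fromEdgeSet {e}) + spanningTreeCount G F
    _ = ∑ T ∈ trees, (#(crossing.bipartiteBelow (fun e T ↦ e ∈ T.edgeSet) T) + 1) := by
      rw [sum_congr rfl habove, sum_card_bipartiteAbove_eq_sum_card_bipartiteBelow, hcount F,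
        sum_add_distrib, ← card_eq_sum_ones]
    _ = #(univ.image f) * spanningTreeCount G F := by
      rw [sum_congr rfl hbelow, sum_const, smul_eq_mul, mul_comm, hcount F]

end SpanningTreeCount

lemma sum_edgeFinset_completeBipartiteGraph {α β M : Type*} [Fintype α] [Fintype β]
    [AddCommMonoid M] [Fintype (completeBipartiteGraph α β).edgeSet] (φ : Sym2 (α ⊕ β) → M) :
    ∑ e ∈ (completeBipartiteGraph α β).edgeFinset, φ e = ∑ a, ∑ b, φ s(.inl a, .inr b) := by
  classical
  have hinj : Function.Injective fun x : α × β ↦ (s(.inl x.1, .inr x.2) : Sym2 (α ⊕ β)) := by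
    rintro ⟨a, b⟩ ⟨a', b'⟩ h
    simpa using h
  have himage : (completeBipartiteGraph α β).edgeFinset =
      univ.map ⟨fun x : α × β ↦ s(.inl x.1, .inr x.2), hinj⟩ := by
    rw [← coe_inj, SimpleGraph.coe_edgeFinset, SimpleGraph.edgeSet_completeBipartiteGraph]
    simp
  rw [himage, sum_map, Fintype.sum_prod_type]
  rfl

section FiberCard

variable {α β ι R : Type*} [Fintype α] [Fintype β] [DecidableEq ι] [Semiring R]

/-- The sizes of the fibres of `g`, as elements of `R`. -/
def fiberCard (R : Type*) [Semiring R] (g : α → ι) (p : ι) : R :=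
  #{a | g a = p}

lemma fiberCard_mergeLabels_comp (g : α → ι) {p q r : ι} (hpq : p ≠ q) (hr : r ≠ q) :
    fiberCard R (mergeLabels p q ∘ g) r = mergeSizes (fiberCard R g) p q r := by
  classical
  simp only [fiberCard, mergeSizes, Function.comp_apply, mergeLabels_apply]
  obtain rfl | hrp := eq_or_ne r p
  · rw [Function.update_self, ← Nat.cast_add, ← card_union_of_disjoint, ← filter_or]
    · congr! 3 with a
      grind
    · exact disjoint_filter.2 fun a _ h h' ↦ hpq (h.symm.trans h')
  · rw [Function.update_of_ne hrp, fiberCard]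
    congr! 3 with a
    grind

lemma sum_comp_eq_sum_fiberCard_mul {g : α → ι} {P : Finset ι} (hg : ∀ a, g a ∈ P) (φ : ι → R) :
    ∑ a, φ (g a) = ∑ p ∈ P, fiberCard R g p * φ p := by
  simp_rw [← sum_fiberwise_of_maps_to' fun a _ ↦ hg a, sum_const, nsmul_eq_mul, fiberCard]

lemma sum_fiberCard {g : α → ι} {P : Finset ι} (hg : ∀ a, g a ∈ P) :
    ∑ p ∈ P, fiberCard R g p = Fintype.card α := by
  simpa using (sum_comp_eq_sum_fiberCard_mul hg fun _ ↦ (1 : R)).symm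

lemma sum_sum_comp_eq_sum_sum_fiberCard_mul {g : α → ι} {h : β → ι} {P : Finset ι}
    (hg : ∀ a, g a ∈ P) (hh : ∀ b, h b ∈ P) (φ : ι → ι → R) :
    ∑ a, ∑ b, φ (g a) (h b) =
      ∑ p ∈ P, ∑ q ∈ P, fiberCard R g p * fiberCard R h q * φ p q := by
  simp only [sum_comp_eq_sum_fiberCard_mul hh]
  rw [sum_comp_eq_sum_fiberCard_mul hg fun p ↦ ∑ q ∈ P, fiberCard R h q * φ p q]
  simp only [mul_sum, mul_assoc]

section Ordered

variable [PartialOrder R] [IsStrictOrderedRing R]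

lemma fiberCard_nonneg (g : α → ι) (p : ι) : 0 ≤ fiberCard R g p :=
  Nat.cast_nonneg _

lemma fiberCard_apply_pos (g : α → ι) (a : α) : 0 < fiberCard R g (g a) :=
  Nat.cast_pos.2 (card_pos.2 ⟨a, mem_filter_univ _ |>.2 rfl⟩)

lemma partDegree_fiberCard_pos [Nonempty α] [Nonempty β] (f : α ⊕ β → ι) (v : α ⊕ β) :
    0 < partDegree (fiberCard R (f ∘ .inl)) (fiberCard R (f ∘ .inr))
      (Fintype.card α) (Fintype.card β) (f v) := by
  have hα : (0 : R) < Fintype.card α := Nat.cast_pos.2 Fintype.card_pos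
  have hβ : (0 : R) < Fintype.card β := Nat.cast_pos.2 Fintype.card_pos
  rcases v with a | b
  · exact add_pos_of_pos_of_nonneg (mul_pos (fiberCard_apply_pos (f ∘ .inl) a) hβ)
      (mul_nonneg (fiberCard_nonneg _ _) hα.le)
  · exact add_pos_of_nonneg_of_pos (mul_nonneg (fiberCard_nonneg _ _) hβ.le)
      (mul_pos (fiberCard_apply_pos (f ∘ .inr) b) hα)

end Ordered

end FiberCard

section CompleteBipartite

variable {α β ι : Type*} [Fintype α] [Fintype β] [DecidableEq ι]
  {F : SimpleGraph (α ⊕ β)} {f : α ⊕ β → ι}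

lemma sum_sum_spanningTreeCount_sup_edge (hf : IsComponentLabelling F f) :
    ∑ a, ∑ b, (if f (.inl a) = f (.inr b) then 0 else
        spanningTreeCount (completeBipartiteGraph α β) (F ⊔ .edge (.inl a) (.inr b))) +
      spanningTreeCount (completeBipartiteGraph α β) F =
        #(univ.image f) * spanningTreeCount (completeBipartiteGraph α β) F := by
  classical
  rw [← sum_spanningTreeCount_sup_fromEdgeSet hf, sum_filter,
    sum_edgeFinset_completeBipartiteGraph]
  simp only [Sym2.map_mk, Sym2.mk_isDiag_iff, ite_not, SimpleGraph.edge]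

/-- The Dong–Ge formula for a forest in the complete bipartite graph on `α` and `β` whose components
are the fibres of `f`. -/
def fiberDongGeFormula (K : Type*) [Field K] (f : α ⊕ β → ι) : K :=
  dongGeFormula (univ.image f) (fiberCard K (f ∘ .inl)) (fiberCard K (f ∘ .inr))
    (Fintype.card α) (Fintype.card β)

variable {K : Type*} [Field K]

lemma fiberDongGeFormula_mergeLabels_comp {p q : ι} (hpq : p ≠ q) (hp : p ∈ univ.image f) :
    fiberDongGeFormula K (mergeLabels p q ∘ f) =
      dongGeFormula ((univ.image f).erase q)
        (mergeSizes (fiberCard K (f ∘ .inl)) p q) (mergeSizes (fiberCard K (f ∘ .inr)) p q)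
        (Fintype.card α) (Fintype.card β) := by
  rw [fiberDongGeFormula, ← image_image, image_mergeLabels hpq hp]
  exact dongGeFormula_congr _ _
    (fun r hr ↦ fiberCard_mergeLabels_comp _ hpq (ne_of_mem_erase hr))
    (fun r hr ↦ fiberCard_mergeLabels_comp _ hpq (ne_of_mem_erase hr))

variable [Nonempty α] [Nonempty β]

lemma fiberDongGeFormula_eq_one [CharZero K] (hcard : #(univ.image f) = 1) :
    fiberDongGeFormula K f = 1 := by
  obtain ⟨p, hp⟩ := card_eq_one.1 hcard
  have hfp : ∀ v, f v ∈ ({p} : Finset ι) := fun v ↦ hp ▸ mem_image_of_mem f (mem_univ v)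
  have hA : fiberCard K (f ∘ .inl) p = Fintype.card α :=
    (sum_singleton _ p).symm.trans (sum_fiberCard fun a ↦ hfp (.inl a))
  have hB : fiberCard K (f ∘ .inr) p = Fintype.card β :=
    (sum_singleton _ p).symm.trans (sum_fiberCard fun b ↦ hfp (.inr b))
  rw [fiberDongGeFormula, hp, ← hA, ← hB]
  exact dongGeFormula_singleton _ _ _ (by simp [hA]) (by simp [hB])

variable [PartialOrder K] [IsStrictOrderedRing K]

lemma sum_sum_fiberDongGeFormula_mergeLabels_comp (f : α ⊕ β → ι) :
    ∑ a, ∑ b, (if f (.inl a) = f (.inr b) then 0 else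
        fiberDongGeFormula K (mergeLabels (f (.inl a)) (f (.inr b)) ∘ f)) =
      (#(univ.image f) - 1) * fiberDongGeFormula K f := by
  have hmem : ∀ v, f v ∈ univ.image f := fun v ↦ mem_image_of_mem f (mem_univ v)
  have hdeg : ∀ p ∈ univ.image f, 0 < partDegree (fiberCard K (f ∘ .inl))
      (fiberCard K (f ∘ .inr)) (Fintype.card α) (Fintype.card β) p := fun p hp ↦ by
    obtain ⟨v, -, rfl⟩ := mem_image.1 hp
    exact partDegree_fiberCard_pos f v
  rw [fiberDongGeFormula, ← sum_sum_dongGeFormula_mergeSizes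
    (Nat.cast_ne_zero.2 Fintype.card_ne_zero) (Nat.cast_ne_zero.2 Fintype.card_ne_zero) hdeg
    (sum_fiberCard fun a ↦ hmem (.inl a)) (sum_fiberCard fun b ↦ hmem (.inr b))]
  refine (sum_sum_comp_eq_sum_sum_fiberCard_mul (g := f ∘ .inl) (h := f ∘ .inr)
    (fun a ↦ hmem (.inl a)) (fun b ↦ hmem (.inr b))
    fun p q ↦ if p = q then 0 else fiberDongGeFormula K (mergeLabels p q ∘ f)).trans ?_
  refine sum_congr rfl fun p hp ↦ sum_congr rfl fun q _ ↦ ?_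
  split_ifs with hpq
  · exact mul_zero _
  · rw [fiberDongGeFormula_mergeLabels_comp hpq hp]

theorem stmt_17_general (hFG : F ≤ completeBipartiteGraph α β) (hF : F.IsAcyclic)
    (hf : IsComponentLabelling F f) :
    (spanningTreeCount (completeBipartiteGraph α β) F : K) = fiberDongGeFormula K f := by
  induction hcard : #(univ.image f) using Nat.strong_induction_on generalizing F f with
  | _ k ih =>
    have hmem : ∀ v, f v ∈ univ.image f := fun v ↦ mem_image_of_mem f (mem_univ v)
    obtain rfl | hk := eq_or_ne k 1
    · rw [spanningTreeCount_of_isTree hFG (hf.isTree hF hcard), Nat.cast_one,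
        fiberDongGeFormula_eq_one hcard]
    have hsup_edge (a : α) (b : β) : ((if f (.inl a) = f (.inr b) then 0 else
        spanningTreeCount (completeBipartiteGraph α β) (F ⊔ .edge (.inl a) (.inr b)) : ℕ) : K) =
          if f (.inl a) = f (.inr b) then 0 else
            fiberDongGeFormula K (mergeLabels (f (.inl a)) (f (.inr b)) ∘ f) := by
      split_ifs with hab
      · exact Nat.cast_zero
      · refine ih _ ?_ (sup_le hFG ((SimpleGraph.edge_le_iff _).2 (.inr (by simp))))
          (hF.sup_edge_of_not_reachable fun h ↦ hab ((hf _ _).2 h)) (hf.sup_edge _ _) rfl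
        rw [← hcard, ← image_image, image_mergeLabels hab (hmem _)]
        exact card_erase_lt_of_mem (hmem _)
    have hrec := congrArg (Nat.cast (R := K)) (sum_sum_spanningTreeCount_sup_edge hf)
    simp only [Nat.cast_add, Nat.cast_sum, Nat.cast_mul, hsup_edge,
      sum_sum_fiberDongGeFormula_mergeLabels_comp] at hrec
    have hcard_sub_one : (#(univ.image f) : K) - 1 ≠ 0 := by
      rw [sub_ne_zero, hcard]
      exact_mod_cast hk
    exact mul_left_cancel₀ hcard_sub_one (by linear_combination -hrec)

end CompleteBipartite

/-- Dong–Ge formula: for a spanning forest `F` of `K_{n_1,n_2}` with `c` components,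
`τ_F(K_{n_1,n_2}) = (1/(n_1 n_2)) · (∏_p (n_{1p}n_2 + n_{2p}n_1)) ·
(1 − Σ_p n_{1p}n_{2p}/(n_{1p}n_2 + n_{2p}n_1))`. -/
theorem stmt_17 (n1 n2 : ℕ) (hn1 : 1 ≤ n1) (hn2 : 1 ≤ n2)
    (F : SimpleGraph (Fin n1 ⊕ Fin n2))
    (hFG : F ≤ completeBipartiteGraph (Fin n1) (Fin n2))
    (hF : F.IsAcyclic)
    (c : ℕ) (comp : Fin n1 ⊕ Fin n2 → Fin c)
    (hcomp : ∀ u v, comp u = comp v ↔ F.Reachable u v)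
    (hsurj : Function.Surjective comp) :
    ((Nat.card {T : SimpleGraph (Fin n1 ⊕ Fin n2) //
        F ≤ T ∧ T ≤ completeBipartiteGraph (Fin n1) (Fin n2) ∧ T.IsTree} : ℕ) : ℝ)
      = 1 / ((n1 : ℝ) * n2) *
          (∏ p, ((n1P comp p : ℝ) * n2 + (n2P comp p : ℝ) * n1)) *
          (1 - ∑ p, (n1P comp p : ℝ) * (n2P comp p : ℝ) /
            ((n1P comp p : ℝ) * n2 + (n2P comp p : ℝ) * n1)) := by
  have : Nonempty (Fin n1) := ⟨⟨0, hn1⟩⟩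
  have : Nonempty (Fin n2) := ⟨⟨0, hn2⟩⟩
  have h := stmt_17_general (K := ℝ) hFG hF hcomp
  simpa only [fiberDongGeFormula, image_univ_of_surjective hsurj, spanningTreeCount, dongGeFormula,
    partDegree, fiberCard, Function.comp_apply, Fintype.card_fin, n1P, n2P,
    Nat.card_eq_fintype_card, Fintype.card_subtype] using h
end
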